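/- Geodesic distance bound: let d ≥ 2 and s = (3d−1)/(3d). There is a constant C > 0 (depending only on d, D, D') such that for all admissible pairs (W̃, W) of subsets of (0,1)^{d−1} and all sufficiently small ε > 0, dist_{W̃}(p,q) ≤ C(1 + ε^{(s−1)(d−3)}) for all p, q ∈ W, where dist_{W̃}(p,q) denotes the infimum of the lengths of Lipschitz curves in W̃ connecting p and q. -/

import Mathlib

open scoped ENNReal
open Set MeasureTheory

noncomputable section

namespace Cleavage

abbrev Epc (d : ℕ) := EuclideanSpace ℝ (Fin d)

/-- the geodesic distance in `S`: the infimum of the lengths (total variations) of Lipschitz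
curves in `S` joining `p` and `q`. -/
def geoDist {d : ℕ} (S : Set (Epc d)) (p q : Epc d) : ℝ≥0∞ :=
  sInf {ℓ : ℝ≥0∞ | ∃ γ : ℝ → Epc d, (∃ K : NNReal, LipschitzOnWith K γ (Icc 0 1)) ∧
    γ 0 = p ∧ γ 1 = q ∧ MapsTo γ (Icc 0 1) S ∧ ℓ = eVariationOn γ (Icc 0 1)}

/-- the mesoscopic exponent `s = (3d-1)/(3d)`. -/
def sExp (d : ℕ) : ℝ := (3 * d - 1) / (3 * d)

/-- the condition (W form): a connected subset of `(0,1)^{d-1}` of `H^{d-1}`-measure in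
`(1/2, 1]` whose boundary has `H^{d-2}`-measure `< D`. -/
def WForm (d : ℕ) (D : ℝ) (S : Set (Epc (d - 1))) : Prop :=
  (∀ x ∈ S, ∀ i, x i ∈ Ioo (0 : ℝ) 1) ∧ IsConnected S ∧
    1 / 2 < (μH[(d : ℝ) - 1] S).toReal ∧ μH[(d : ℝ) - 1] S ≤ 1 ∧
    μH[(d : ℝ) - 2] (frontier S) < ENNReal.ofReal D

/-- the subset of `W̃` of points of distance `> D'ε^{1-s}` from `∂W̃`. -/
def coreSet (d : ℕ) (D' ε : ℝ) (Wt : Set (Epc (d - 1))) : Set (Epc (d - 1)) :=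
  {x ∈ Wt | D' * ε ^ (1 - sExp d) < Metric.infDist x (frontier Wt)}

/-- the admissible pairs `(W̃, W)`: `W̃` of the form (W form), and `W` the connected component
of `{x ∈ W̃ : dist(x,∂W̃) > D'ε^{1-s}}` of largest measure, again of the form (W form). -/
def Admissible (d : ℕ) (D D' ε : ℝ) (Wt W : Set (Epc (d - 1))) : Prop :=
  WForm d D Wt ∧
    (∃ x₀ ∈ coreSet d D' ε Wt, W = connectedComponentIn (coreSet d D' ε Wt) x₀ ∧
      ∀ x ∈ coreSet d D' ε Wt,
        μH[(d : ℝ) - 1] (connectedComponentIn (coreSet d D' ε Wt) x) ≤ μH[(d : ℝ) - 1] W) ∧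
    WForm d D W

end Cleavage

namespace Cleavage

/-!
Let `n = d - 1`. If `n = 1`, then `W` is an interval. Otherwise put a grid of mesh `δ ≈ ε^{1-s}`
over `W̃` and delete the edges that meet `∂W̃`. Averaging over translations, some translate of
the grid loses only `O(δ^{1-n})` edges, and a point of `W` can be joined to a nearby vertex
within a ball in which no edge is lost. Two such vertices lie in one component of the remaining
subgraph of `ℤⁿ`, and it suffices to bound their graph distance by `O(δ^{1-n})`.

Let `b k` and `σ k` be the numbers of vertices at distance at most `k`, respectively exactly
`k`, from the first vertex, and `V = O(δ^{-n})` the size of its component. If no deleted edge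
lies next to the sphere of radius `k`, the discrete gradient of the indicator of the ball of
radius `k` is closed, and integrating it along rays shows that every coordinate line through the
ball, or every one through its complement in the component, meets the sphere. Using two
coordinate directions, `min (b k) (V - b k) ≤ (σ k)²`, so by monotonicity of
`√(b k) - √(V - b k)` there are only `O(√V) = O(δ^{-n/2})` such radii below the distance sought.
Each of the other radii is charged to a deleted edge near its sphere, and each deleted edge is
charged `O(1)` times.
-/

section GraphDistance

variable {V : Type*} {G : SimpleGraph V} {u : V}

/-- The vertices at distance exactly `k` from `u` in `G`; none of them lies outside the
component of `u`. -/
def graphSphere (G : SimpleGraph V) (u : V) (k : ℕ) : Set V := {v | G.edist v u = k}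

lemma graphSphere_nonempty_of_le_dist {v : V} (huv : G.Reachable u v) {k : ℕ}
    (hk : k ≤ G.dist u v) : (graphSphere G u k).Nonempty := by
  obtain ⟨w, hw⟩ := huv.exists_walk_length_eq_dist
  refine ⟨w.getVert k, ?_⟩
  have hdist : G.dist u (w.getVert k) = k := by
    refine le_antisymm ((SimpleGraph.dist_le (w.take k)).trans (by simp)) ?_
    have hrest := SimpleGraph.dist_le (w.drop k)
    have htri := (w.take k).reachable.dist_triangle_left v
    rw [SimpleGraph.Walk.drop_length] at hrest
    omega
  rw [graphSphere, mem_ofPred_eq, SimpleGraph.edist_comm,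
    ← (w.take k).reachable.coe_dist_eq_edist, hdist]

lemma graphSphere_subset_ball_top (k : ℕ) : graphSphere G u k ⊆ G.ball u ⊤ := fun v hv ↦ by
  rw [SimpleGraph.mem_ball, show G.edist v u = k from hv]
  exact ENat.natCast_lt_top k

lemma ncard_ball_succ (hfin : (G.ball u ⊤).Finite) (k : ℕ) :
    (G.ball u (k + 1)).ncard = (G.ball u k).ncard + (graphSphere G u k).ncard := by
  have hunion : G.ball u (k + 1) = G.ball u k ∪ graphSphere G u k := by
    ext v
    simp only [SimpleGraph.mem_ball, graphSphere, mem_union, mem_ofPred_eq]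
    rw [ENat.lt_add_one_iff (ENat.natCast_ne_top k), le_iff_lt_or_eq]
  have hdisj : Disjoint (G.ball u k) (graphSphere G u k) :=
    disjoint_left.2 fun v hv hv' ↦ (SimpleGraph.mem_ball.1 hv).ne hv'
  rw [hunion, ncard_union_eq hdisj (hfin.subset (G.ball_mono le_top))
    (hfin.subset (graphSphere_subset_ball_top k))]

lemma three_mul_sqrt_add_one_le {a b s : ℝ} (ha : 0 ≤ a) (hs : 1 ≤ s) (has : a ≤ s ^ 2)
    (hab : a + s ≤ b) : 3 * √a + 1 ≤ 3 * √b := by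
  have hsa : √a ≤ s := Real.sqrt_le_left (by linarith) |>.2 has
  have : √a + 1 / 3 ≤ √b := Real.le_sqrt_of_sq_le (by nlinarith [Real.sq_sqrt ha])
  linarith

/-- The difference of the square roots of the volumes inside and outside the ball of radius `k`,
within the component of `u`: a monotone potential for the radius. -/
def ballBalance (G : SimpleGraph V) (u : V) (k : ℕ) : ℝ :=
  √(G.ball u k).ncard - √(G.ball u ⊤ \ G.ball u k).ncard

lemma ncard_diff_ball_succ (hfin : (G.ball u ⊤).Finite) (k : ℕ) :
    (G.ball u ⊤ \ G.ball u k).ncard =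
      (G.ball u ⊤ \ G.ball u (k + 1)).ncard + (graphSphere G u k).ncard := by
  have hinside (j : ℕ) :=
    ncard_sdiff_add_ncard_of_subset (G.ball_mono (c := u) (le_top (a := (j : ℕ∞)))) hfin
  have hk := hinside k
  have hk' := hinside (k + 1)
  push_cast at hk'
  have := ncard_ball_succ hfin k
  omega

lemma ballBalance_monotone (hfin : (G.ball u ⊤).Finite) : Monotone (ballBalance G u) := by
  refine monotone_nat_of_le_succ fun k ↦ sub_le_sub (Real.sqrt_le_sqrt ?_) (Real.sqrt_le_sqrt ?_)
  · exact_mod_cast (ncard_ball_succ hfin k).ge.trans' (Nat.le_add_right _ _)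
  · exact_mod_cast (ncard_diff_ball_succ hfin k).ge.trans' (Nat.le_add_right _ _)

lemma one_le_three_mul_ballBalance_sub (hfin : (G.ball u ⊤).Finite) {k : ℕ}
    (hne : (graphSphere G u k).Nonempty)
    (hwide : (G.ball u (k + 1)).ncard ≤ (graphSphere G u k).ncard ^ 2 ∨
      (G.ball u ⊤ \ G.ball u (k + 1)).ncard ≤ (graphSphere G u k).ncard ^ 2) :
    1 ≤ 3 * (ballBalance G u (k + 1) - ballBalance G u k) := by
  have hone : (1 : ℝ) ≤ (graphSphere G u k).ncard := by
    exact_mod_cast (ncard_pos (hfin.subset (graphSphere_subset_ball_top k))).2 hne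
  have hball := ncard_ball_succ hfin k
  have hdiff := ncard_diff_ball_succ hfin k
  have hball' : √(G.ball u k).ncard ≤ √(G.ball u (k + 1)).ncard :=
    Real.sqrt_le_sqrt (by exact_mod_cast hball.ge.trans' (Nat.le_add_right _ _))
  have hdiff' : √(G.ball u ⊤ \ G.ball u (k + 1)).ncard ≤ √(G.ball u ⊤ \ G.ball u k).ncard :=
    Real.sqrt_le_sqrt (by exact_mod_cast hdiff.ge.trans' (Nat.le_add_right _ _))
  simp only [ballBalance, Nat.cast_add, Nat.cast_one]
  rcases hwide with h | h
  · have := three_mul_sqrt_add_one_le (a := (G.ball u k).ncard) (b := (G.ball u (k + 1)).ncard)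
      (by positivity) hone (by exact_mod_cast h.trans' (by omega)) (by exact_mod_cast hball.ge)
    linarith
  · have := three_mul_sqrt_add_one_le (a := (G.ball u ⊤ \ G.ball u (k + 1)).ncard)
      (b := (G.ball u ⊤ \ G.ball u k).ncard)
      (by positivity) hone (by exact_mod_cast h) (by exact_mod_cast hdiff.ge)
    linarith

/-- Each of these levels increases the monotone `ballBalance` by at least `1 / 3`. -/
lemma card_wide_levels_le (hfin : (G.ball u ⊤).Finite) (levels : Finset ℕ)
    (hne : ∀ k ∈ levels, (graphSphere G u k).Nonempty)
    (hwide : ∀ k ∈ levels, (G.ball u (k + 1)).ncard ≤ (graphSphere G u k).ncard ^ 2 ∨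
      (G.ball u ⊤ \ G.ball u (k + 1)).ncard ≤ (graphSphere G u k).ncard ^ 2) :
    (levels.card : ℝ) ≤ 6 * √(G.ball u ⊤).ncard := by
  obtain ⟨K, hK⟩ := levels.exists_nat_subset_range
  have hle_total (s : Set V) (hs : s ⊆ G.ball u ⊤) : √s.ncard ≤ √(G.ball u ⊤).ncard :=
    Real.sqrt_le_sqrt (by exact_mod_cast ncard_le_ncard hs hfin)
  calc (levels.card : ℝ) = ∑ _k ∈ levels, (1 : ℝ) := by simp
    _ ≤ ∑ k ∈ levels, 3 * (ballBalance G u (k + 1) - ballBalance G u k) :=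
        Finset.sum_le_sum fun k hk ↦
          one_le_three_mul_ballBalance_sub hfin (hne k hk) (hwide k hk)
    _ ≤ ∑ k ∈ Finset.range K, 3 * (ballBalance G u (k + 1) - ballBalance G u k) :=
        Finset.sum_le_sum_of_subset_of_nonneg hK fun k _ _ ↦
          mul_nonneg (by norm_num) (sub_nonneg.2 (ballBalance_monotone hfin k.le_succ))
    _ = 3 * (ballBalance G u K - ballBalance G u 0) := by
        rw [← Finset.mul_sum, Finset.sum_range_sub]
    _ ≤ 6 * √(G.ball u ⊤).ncard := by
        have h0 := hle_total _ (sdiff_subset (s := G.ball u ⊤) (t := G.ball u (0 : ℕ)))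
        have hK := hle_total _ (G.ball_mono (c := u) (le_top (a := (K : ℕ∞))))
        have h0' := Real.sqrt_nonneg (G.ball u (0 : ℕ)).ncard
        have hK' := Real.sqrt_nonneg (G.ball u ⊤ \ G.ball u K).ncard
        unfold ballBalance
        linarith

lemma mem_graphSphere_of_adj {v w : V} (hvw : G.Adj v w) {k : ℕ} (hv : v ∈ G.ball u (k + 1))
    (hw : w ∉ G.ball u (k + 1)) : v ∈ graphSphere G u k := by
  rw [SimpleGraph.mem_ball, ENat.lt_add_one_iff (ENat.natCast_ne_top k)] at hv
  rw [SimpleGraph.mem_ball, not_lt] at hw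
  have htri : G.edist w u ≤ 1 + G.edist v u :=
    (SimpleGraph.edist_triangle (v := v)).trans_eq
      (by rw [SimpleGraph.edist_eq_one_iff_adj.2 hvw.symm])
  refine hv.antisymm ?_
  have := hw.trans htri
  rw [add_comm] at this
  exact (ENat.add_le_add_iff_left (by simp)).1 this

end GraphDistance

section LatticeCochain

variable {ι : Type*} [DecidableEq ι]

/-- A 1-cochain on the lattice `ℤ^ι`, whose value on the edge from `x` to `x + eᵢ` is `φ x i`, is
closed when it sums to zero around every unit square. -/
def IsClosedCochain (φ : (ι → ℤ) → ι → ℤ) : Prop :=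
  ∀ x i j, φ x i + φ (x + Pi.single i 1) j = φ x j + φ (x + Pi.single j 1) i

/-- The sum of a cochain along the `N` consecutive edges from `x` in direction `i`: a primitive (up
to sign) of a closed cochain that vanishes beyond the box of side `N`. -/
def rayPotential (φ : (ι → ℤ) → ι → ℤ) (i : ι) (N : ℕ) (x : ι → ℤ) : ℤ :=
  ∑ t ∈ Finset.range N, φ (x + Pi.single i (t : ℤ)) i

variable {φ : (ι → ℤ) → ι → ℤ} {i : ι} {N : ℕ} {x : ι → ℤ}

lemma le_add_natCast_single (x : ι → ℤ) (i : ι) (t : ℕ) : x ≤ x + Pi.single i (t : ℤ) :=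
  le_add_of_nonneg_right (Pi.single_nonneg.2 (Int.natCast_nonneg t))

lemma rayPotential_add_single (hφ : IsClosedCochain φ) (hsupp : ∀ x i, φ x i ≠ 0 → ∀ l, x l < N)
    (hx : 0 ≤ x i) (j : ι) :
    rayPotential φ i N (x + Pi.single j 1) = rayPotential φ i N x - φ x j := by
  have hend : φ (x + Pi.single i (N : ℤ)) j = 0 := by
    by_contra hne
    have := hsupp _ _ hne i
    simp only [Pi.add_apply, Pi.single_eq_same] at this
    omega
  have hstep (t : ℕ) : φ (x + Pi.single j 1 + Pi.single i (t : ℤ)) i - φ (x + Pi.single i (t : ℤ)) i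
      = φ (x + Pi.single i ((t + 1 : ℕ) : ℤ)) j - φ (x + Pi.single i (t : ℤ)) j := by
    have := hφ (x + Pi.single i (t : ℤ)) i j
    rw [add_assoc x, ← Pi.single_add, add_right_comm] at this
    push_cast
    linarith
  have htele : rayPotential φ i N (x + Pi.single j 1) - rayPotential φ i N x
      = φ (x + Pi.single i (N : ℤ)) j - φ x j := by
    rw [rayPotential, rayPotential, ← Finset.sum_sub_distrib,
      Finset.sum_congr rfl fun t _ ↦ hstep t]
    simpa using Finset.sum_range_sub (fun t : ℕ ↦ φ (x + (Pi.single i (t : ℤ) : ι → ℤ)) j) N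
  linarith

lemma rayPotential_eq_zero (hsupp : ∀ x i, φ x i ≠ 0 → ∀ l, x l < N) {j : ι} (hj : N ≤ x j) :
    rayPotential φ i N x = 0 := by
  refine Finset.sum_eq_zero fun t _ ↦ ?_
  by_contra hne
  have hlt := hsupp _ _ hne j
  exact absurd (hj.trans (le_add_natCast_single x i t j)) hlt.not_ge

/-- The potential is locally constant off the support and vanishes far out, so where it is nonzero
the support is met in every coordinate direction, not only in the direction of integration. -/
lemma exists_ne_zero_of_rayPotential_ne_zero (hφ : IsClosedCochain φ)
    (hsupp : ∀ x i, φ x i ≠ 0 → ∀ l, x l < N) (hx : 0 ≤ x i) (hne : rayPotential φ i N x ≠ 0)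
    (j : ι) : ∃ t : ℕ, φ (x + Pi.single j (t : ℤ)) j ≠ 0 := by
  by_contra! hzero
  have hconst (t : ℕ) : rayPotential φ i N (x + Pi.single j (t : ℤ)) = rayPotential φ i N x := by
    induction t with
    | zero => simp
    | succ t ih =>
      rw [Nat.cast_succ, Pi.single_add, ← add_assoc,
        rayPotential_add_single hφ hsupp (hx.trans (le_add_natCast_single x j t i)), hzero,
        sub_zero, ih]
  refine hne ((hconst (N - x j).toNat).symm.trans (rayPotential_eq_zero hsupp (j := j) ?_))
  rw [Pi.add_apply, Pi.single_eq_same]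
  omega

end LatticeCochain

lemma ncard_le_sq_of_agree_off {ι α : Type*} {S E : Set (ι → α)} (hS : S.Finite) {i j : ι}
    (hij : i ≠ j) (hi : ∀ x ∈ E, ∃ y ∈ S, ∀ l ≠ i, y l = x l)
    (hj : ∀ x ∈ E, ∃ y ∈ S, ∀ l ≠ j, y l = x l) : E.ncard ≤ S.ncard ^ 2 := by
  choose! y hyS hy using hi
  choose! z hzS hz using hj
  rw [sq, ← ncard_prod]
  refine ncard_le_ncard_of_injOn (fun x ↦ (y x, z x)) (fun x hx ↦ ⟨hyS x hx, hzS x hx⟩)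
    (fun x hx x' hx' heq ↦ funext fun l ↦ ?_) (hS.prod hS)
  obtain ⟨heqy, heqz⟩ := Prod.mk.inj heq
  obtain rfl | hl := eq_or_ne l i
  · rw [← hz x hx l hij, ← hz x' hx' l hij, heqz]
  · rw [← hy x hx l hl, ← hy x' hx' l hl, heqy]

section LatticeGraph

variable {ι : Type*} [DecidableEq ι]

/-- The lattice `ℤ^ι` with nearest-neighbour edges, without those in `B`; the edge from `x` to
`x + eᵢ` is encoded as `(x, i)`. -/
def latticeGraph (B : Set ((ι → ℤ) × ι)) : SimpleGraph (ι → ℤ) :=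
  SimpleGraph.fromRel fun x y ↦ ∃ i, y = x + Pi.single i 1 ∧ (x, i) ∉ B

/-- No edge starting in the cube of side `2` about `x` is in `B`. -/
def UnblockedAround (B : Set ((ι → ℤ) × ι)) (x : ι → ℤ) : Prop :=
  ∀ z ∈ Icc (x - 1) (x + 1), ∀ i, (z, i) ∉ B

/-- The differences of `f` along the edges outside `B`, as a cochain that vanishes on `B`. -/
def gradient (B : Set ((ι → ℤ) × ι)) (f : (ι → ℤ) → ℤ) (x : ι → ℤ) (i : ι) : ℤ :=
  open Classical in if (x, i) ∈ B then 0 else f (x + Pi.single i 1) - f x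

variable {B : Set ((ι → ℤ) × ι)} {u x : ι → ℤ} {i : ι} {k : ℕ}

lemma latticeGraph_adj_add_single (hx : (x, i) ∉ B) :
    (latticeGraph B).Adj x (x + Pi.single i 1) :=
  (SimpleGraph.fromRel_adj _ _ _).2 ⟨by simp, .inl ⟨i, rfl, hx⟩⟩

lemma UnblockedAround.reachable [Finite ι] (hB : UnblockedAround B x)
    {y : ι → ℤ} (hy : y ∈ Icc (x - 1) (x + 1)) : (latticeGraph B).Reachable x y := by
  cases nonempty_fintype ι
  have hmem (s : Finset ι) : s.piecewise y x ∈ Icc (x - 1) (x + 1) :=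
    ⟨s.le_piecewise_of_le_of_le hy.1 (by simp), s.piecewise_le_of_le_of_le hy.2 (by simp)⟩
  suffices ∀ s : Finset ι, (latticeGraph B).Reachable x (s.piecewise y x) by
    simpa using this Finset.univ
  intro s
  induction s using Finset.induction_on with
  | empty => simp
  | insert i s hi ih =>
    refine ih.trans ?_
    have hxi : s.piecewise y x i = x i := s.piecewise_eq_of_notMem _ _ hi
    have hstep : (insert i s).piecewise y x = s.piecewise y x + Pi.single i (y i - x i) := by
      rw [Finset.piecewise_insert]
      ext l
      obtain rfl | hl := eq_or_ne l i <;> simp [*]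
    have hle : x i - 1 ≤ y i ∧ y i ≤ x i + 1 := ⟨hy.1 i, hy.2 i⟩
    obtain h | h | h : y i - x i = 0 ∨ y i - x i = 1 ∨ y i - x i = -1 := by omega
    · simp [hstep, h]
    · rw [hstep, h]
      exact (latticeGraph_adj_add_single (hB _ (hmem s) i)).reachable
    · have hback : (insert i s).piecewise y x + Pi.single i 1 = s.piecewise y x := by
        rw [hstep, h, add_assoc, ← Pi.single_add]
        simp
      simpa only [hback] using
        (latticeGraph_adj_add_single (hB _ (hmem (insert i s)) i)).reachable.symm

lemma mem_graphSphere_of_gradient_ne_zero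
    (hne : gradient B (((latticeGraph B).ball u (k + 1)).indicator 1) x i ≠ 0) :
    x ∈ graphSphere (latticeGraph B) u k ∨
      x + Pi.single i 1 ∈ graphSphere (latticeGraph B) u k := by
  have hfree : (x, i) ∉ B := fun hB ↦ hne (if_pos hB)
  have hadj := latticeGraph_adj_add_single hfree
  rw [gradient, if_neg hfree] at hne
  by_cases hx : x ∈ (latticeGraph B).ball u (k + 1) <;>
    by_cases hx' : x + Pi.single i 1 ∈ (latticeGraph B).ball u (k + 1)
  · simp [hx, hx'] at hne
  · exact .inl (mem_graphSphere_of_adj hadj hx hx')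
  · exact .inr (mem_graphSphere_of_adj hadj.symm hx' hx)
  · simp [hx, hx'] at hne

lemma single_add_single_le_one {j : ι} (hij : i ≠ j) :
    (Pi.single i 1 + Pi.single j 1 : ι → ℤ) ≤ 1 := fun l ↦ by
  obtain rfl | hi := eq_or_ne l i
  · simp [hij]
  · obtain rfl | hj := eq_or_ne l j <;> simp [*]

lemma isClosedCochain_gradient_ball
    (hfree : ∀ x ∈ graphSphere (latticeGraph B) u k, UnblockedAround B x) :
    IsClosedCochain (gradient B (((latticeGraph B).ball u (k + 1)).indicator 1)) := by
  intro x i j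
  obtain rfl | hij := eq_or_ne i j
  · rfl
  have hi : x ≤ x + Pi.single i 1 := le_add_natCast_single x i 1
  have hj : x ≤ x + Pi.single j 1 := le_add_natCast_single x j 1
  have hij' : x + Pi.single i 1 ≤ x + Pi.single i 1 + Pi.single j 1 := le_add_natCast_single _ j 1
  have hji' : x + Pi.single j 1 ≤ x + Pi.single j 1 + Pi.single i 1 := le_add_natCast_single _ i 1
  have hcomm : x + Pi.single j 1 + Pi.single i 1 = x + Pi.single i 1 + Pi.single j 1 := by abel
  rw [hcomm] at hji'
  by_cases hcorner : ∃ c ∈ graphSphere (latticeGraph B) u k,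
      c ∈ Icc x (x + Pi.single i 1 + Pi.single j 1)
  · obtain ⟨c, hc, hxc, hcx⟩ := hcorner
    have hdiag := add_le_add_right (single_add_single_le_one hij) x
    rw [← add_assoc] at hdiag
    have hunblocked {z : ι → ℤ} (hxz : x ≤ z) (hzx : z ≤ x + Pi.single i 1 + Pi.single j 1)
        (l : ι) : (z, l) ∉ B :=
      hfree c hc z ⟨sub_le_iff_le_add.2 (hcx.trans (hdiag.trans (add_le_add_left hxz 1))),
        hzx.trans (hdiag.trans (add_le_add_left hxc 1))⟩ l
    simp only [gradient, if_neg (hunblocked le_rfl (hi.trans hij') _),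
      if_neg (hunblocked hi hij' _), if_neg (hunblocked hj hji' _), hcomm]
    ring
  · have hzero {z : ι → ℤ} {l : ι} (hxz : x ≤ z) (hzl : z ≤ z + Pi.single l 1)
        (hzx : z + Pi.single l 1 ≤ x + Pi.single i 1 + Pi.single j 1) :
        gradient B (((latticeGraph B).ball u (k + 1)).indicator 1) z l = 0 := by
      by_contra hne
      rcases mem_graphSphere_of_gradient_ne_zero hne with hz | hz
      · exact hcorner ⟨z, hz, hxz, hzl.trans hzx⟩
      · exact hcorner ⟨_, hz, hxz.trans hzl, hzx⟩
    rw [hzero le_rfl hi hij', hzero hi hij' le_rfl, hzero le_rfl hj hji',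
      hzero hj (hji'.trans_eq hcomm.symm) hcomm.le]

variable {N : ℕ}

lemma lt_of_gradient_ball_ne_zero (hbox : ∀ v ∈ (latticeGraph B).ball u ⊤, ∀ l, v l ∈ Ico (0 : ℤ) N)
    (x : ι → ℤ) (i : ι)
    (hne : gradient B (((latticeGraph B).ball u (k + 1)).indicator 1) x i ≠ 0) (l : ι) :
    x l < N := by
  rcases mem_graphSphere_of_gradient_ne_zero hne with hx | hx
  · exact (hbox _ (graphSphere_subset_ball_top k hx) l).2
  · exact (le_add_natCast_single x i 1 l).trans_lt (hbox _ (graphSphere_subset_ball_top k hx) l).2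

lemma rayPotential_gradient_add_const {f : (ι → ℤ) → ℤ}
    (hφ : IsClosedCochain (gradient B f)) (hsupp : ∀ x i, gradient B f x i ≠ 0 → ∀ l, x l < N)
    (hbox : ∀ v ∈ (latticeGraph B).ball u ⊤, ∀ l, v l ∈ Ico (0 : ℤ) N) (i : ι)
    (hx : x ∈ (latticeGraph B).ball u ⊤) :
    rayPotential (gradient B f) i N x + f x = rayPotential (gradient B f) i N u + f u := by
  have hedge {v : ι → ℤ} {j : ι} (hv : v ∈ (latticeGraph B).ball u ⊤) (hfree : (v, j) ∉ B) :
      rayPotential (gradient B f) i N (v + Pi.single j 1) + f (v + Pi.single j 1) =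
        rayPotential (gradient B f) i N v + f v := by
    rw [rayPotential_add_single hφ hsupp (hbox v hv i).1, gradient, if_neg hfree]
    ring
  induction ((SimpleGraph.reachable_iff_reflTransGen _ _).1
    (SimpleGraph.mem_ball_top.1 hx).symm) with
  | refl => rfl
  | @tail v w huv hvw ih =>
    have hv : v ∈ (latticeGraph B).ball u ⊤ :=
      SimpleGraph.mem_ball_top.2 ((SimpleGraph.reachable_iff_reflTransGen _ _).2 huv).symm
    rw [← ih hv]
    rcases ((SimpleGraph.fromRel_adj _ _ _).1 hvw).2 with ⟨j, rfl, hfree⟩ | ⟨j, rfl, hfree⟩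
    · exact hedge hv hfree
    · exact (hedge hx hfree).symm

/-- A discrete form of the simple connectedness of space: the surface separating the ball from the
rest of its component is seen in every direction from all of one of the two sides. -/
lemma exists_side_seeing_graphSphere [Nonempty ι]
    (hfree : ∀ x ∈ graphSphere (latticeGraph B) u k, UnblockedAround B x)
    (hbox : ∀ v ∈ (latticeGraph B).ball u ⊤, ∀ l, v l ∈ Ico (0 : ℤ) N) :
    ∃ E, (E = (latticeGraph B).ball u (k + 1) ∨
        E = (latticeGraph B).ball u ⊤ \ (latticeGraph B).ball u (k + 1)) ∧
      ∀ j, ∀ x ∈ E, ∃ y ∈ graphSphere (latticeGraph B) u k, ∀ l ≠ j, y l = x l := by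
  classical
  obtain ⟨i⟩ := ‹Nonempty ι›
  set f : (ι → ℤ) → ℤ := ((latticeGraph B).ball u (k + 1)).indicator 1 with hf
  have hφ : IsClosedCochain (gradient B f) := isClosedCochain_gradient_ball hfree
  have hsupp : ∀ x i, gradient B f x i ≠ 0 → ∀ l, x l < N := lt_of_gradient_ball_ne_zero hbox
  have hconst {x : ι → ℤ} := rayPotential_gradient_add_const (x := x) hφ hsupp hbox i
  set c := rayPotential (gradient B f) i N u + f u
  have hsees (j : ι) {x : ι → ℤ} (hx : x ∈ (latticeGraph B).ball u ⊤) (hne : f x ≠ c) :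
      ∃ y ∈ graphSphere (latticeGraph B) u k, ∀ l ≠ j, y l = x l := by
    obtain ⟨t, ht⟩ := exists_ne_zero_of_rayPotential_ne_zero hφ hsupp (hbox x hx i).1
      (fun h ↦ hne (by rw [← hconst hx, h, zero_add])) j
    rcases mem_graphSphere_of_gradient_ne_zero ht with hy | hy
    · exact ⟨_, hy, fun l hl ↦ by simp [hl]⟩
    · exact ⟨_, hy, fun l hl ↦ by simp [hl]⟩
  by_cases hc : c = 0
  · refine ⟨_, .inl rfl, fun j x hx ↦ hsees j (SimpleGraph.ball_mono le_top hx) ?_⟩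
    simp [hf, hx, hc]
  · refine ⟨_, .inr rfl, fun j x hx ↦ hsees j hx.1 ?_⟩
    simpa [hf, hx.2] using Ne.symm hc

variable [Fintype ι]

lemma card_Icc_sub_one_add_one (x : ι → ℤ) :
    (Finset.Icc (x - 1) (x + 1)).card = 3 ^ Fintype.card ι := by
  simp [Pi.card_Icc, show ∀ a : ℤ, a + 1 + 1 - (a - 1) = 3 by intro a; ring]

lemma card_blocked_levels_le (hB : B.Finite) (levels : Finset ℕ)
    (hlevels : ∀ k ∈ levels, ∃ x ∈ graphSphere (latticeGraph B) u k, ¬ UnblockedAround B x) :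
    levels.card ≤ 3 ^ Fintype.card ι * B.ncard := by
  choose! x hxk hx using hlevels
  have hinj : InjOn x levels := fun k hk k' hk' heq ↦ by
    have hk := hxk k hk
    have hk' := hxk k' hk'
    rw [heq] at hk
    exact_mod_cast (show ((k : ℕ∞) = k') from hk.symm.trans hk')
  rw [ncard_eq_toFinset_card B hB]
  calc levels.card ≤ (hB.toFinset.biUnion fun e ↦ Finset.Icc (e.1 - 1) (e.1 + 1)).card := by
        refine Finset.card_le_card_of_injOn x (fun k hk ↦ ?_) hinj
        have hblocked := hx k hk
        simp only [UnblockedAround, not_forall, not_not] at hblocked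
        obtain ⟨z, ⟨hz, hz'⟩, i, hzi⟩ := hblocked
        refine Finset.mem_biUnion.2 ⟨(z, i), hB.mem_toFinset.2 hzi, Finset.mem_Icc.2 ⟨?_, ?_⟩⟩
        · exact sub_le_iff_le_add.2 hz'
        · exact sub_le_iff_le_add.1 hz
    _ ≤ hB.toFinset.card * 3 ^ Fintype.card ι :=
        Finset.card_biUnion_le_card_mul _ _ _ fun e _ ↦ (card_Icc_sub_one_add_one _).le
    _ = _ := mul_comm _ _

theorem dist_latticeGraph_le [Nontrivial ι] (hB : B.Finite)
    (hbox : ∀ v ∈ (latticeGraph B).ball u ⊤, ∀ l, v l ∈ Ico (0 : ℤ) N)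
    (hx : (latticeGraph B).Reachable u x) :
    ((latticeGraph B).dist u x : ℝ) ≤
      3 ^ Fintype.card ι * B.ncard + 6 * √((N : ℝ) ^ Fintype.card ι) := by
  classical
  have hcomponent : (latticeGraph B).ball u ⊤ ⊆
      (Fintype.piFinset fun _ : ι ↦ Finset.Ico (0 : ℤ) N : Finset (ι → ℤ)) := fun v hv ↦ by
    simpa using hbox v hv
  have hfin : ((latticeGraph B).ball u ⊤).Finite := (Finset.finite_toSet _).subset hcomponent
  have hvolume : ((latticeGraph B).ball u ⊤).ncard ≤ N ^ Fintype.card ι := by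
    refine (ncard_le_ncard hcomponent (Finset.finite_toSet _)).trans_eq ?_
    rw [ncard_coe_finset]
    simp
  set levels := Finset.range ((latticeGraph B).dist u x)
  let good (k : ℕ) : Prop := ∀ x ∈ graphSphere (latticeGraph B) u k, UnblockedAround B x
  have hgood : ((levels.filter good).card : ℝ) ≤ 6 * √((latticeGraph B).ball u ⊤).ncard := by
    refine card_wide_levels_le hfin _ (fun k hk ↦ ?_) fun k hk ↦ ?_
    · exact graphSphere_nonempty_of_le_dist hx (Finset.mem_range.1 (Finset.mem_filter.1 hk).1).le
    · obtain ⟨i, j, hij⟩ := exists_pair_ne ι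
      obtain ⟨E, hE, hsees⟩ := exists_side_seeing_graphSphere (Finset.mem_filter.1 hk).2 hbox
      have := ncard_le_sq_of_agree_off (hfin.subset (graphSphere_subset_ball_top k)) hij
        (hsees i) (hsees j)
      rcases hE with rfl | rfl
      exacts [.inl this, .inr this]
  have hbad : (levels.filter (¬ good ·)).card ≤ 3 ^ Fintype.card ι * B.ncard :=
    card_blocked_levels_le hB _ fun k hk ↦ by
      simpa [good] using (Finset.mem_filter.1 hk).2
  calc ((latticeGraph B).dist u x : ℝ)
      = (levels.filter (¬ good ·)).card + (levels.filter good).card := by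
        rw [add_comm, ← Nat.cast_add, Finset.card_filter_add_card_filter_not, Finset.card_range]
    _ ≤ 3 ^ Fintype.card ι * B.ncard + 6 * √((N : ℝ) ^ Fintype.card ι) :=
        add_le_add (by exact_mod_cast hbad) (hgood.trans (by gcongr; exact_mod_cast hvolume))

end LatticeGraph

section OffsetAveraging

lemma exists_cover_of_hausdorffMeasure_lt {X : Type*} [EMetricSpace X] [MeasurableSpace X]
    [BorelSpace X] {m : ℝ} {F : Set X} {D : ℝ≥0∞} (hF : μH[m] F < D) {r : ℝ≥0∞} (hr : 0 < r) :
    ∃ t : ℕ → Set X, F ⊆ ⋃ j, t j ∧ (∀ j, Metric.ediam (t j) ≤ r) ∧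
      ∑' j, ⨆ _ : (t j).Nonempty, Metric.ediam (t j) ^ m < D := by
  rw [Measure.hausdorffMeasure_apply] at hF
  have hr := (le_iSup₂ (f := fun (r : ℝ≥0∞) (_ : 0 < r) ↦ ⨅ (t : ℕ → Set X)
    (_ : F ⊆ ⋃ j, t j) (_ : ∀ j, Metric.ediam (t j) ≤ r),
      ∑' j, ⨆ _ : (t j).Nonempty, Metric.ediam (t j) ^ m) r hr).trans_lt hF
  simpa only [iInf_lt_iff, exists_prop] using hr

variable {ι : Type*} [Fintype ι]

lemma lintegral_unitCube_tsum_translate {f : (ι → ℝ) → ℝ≥0∞} (hf : Measurable f) :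
    ∫⁻ a in univ.pi fun _ ↦ Ico 0 1, ∑' x : ι → ℤ, f (a + fun l ↦ (x l : ℝ)) = ∫⁻ y, f y := by
  let b := Pi.basisFun ℝ ι
  let e : (ι → ℤ) ≃ Submodule.span ℤ (range b) := (b.restrictScalars ℤ).equivFun.symm.toEquiv
  have he (x : ι → ℤ) (a : ι → ℝ) : e x +ᵥ a = a + fun l ↦ (x l : ℝ) := by
    classical
    ext l
    simp [e, Module.Basis.equivFun_symm_apply, Submodule.vadd_def, add_comm, b, Finset.sum_apply,
      Module.Basis.restrictScalars_apply, Pi.single_apply]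
  have : VAddInvariantMeasure (Submodule.span ℤ (range b)) (ι → ℝ) volume :=
    inferInstanceAs (VAddInvariantMeasure (Submodule.span ℤ (range b)).toAddSubgroup _ volume)
  have hmeas (x : ι → ℤ) : Measurable fun a : ι → ℝ ↦ f (a + fun l ↦ (x l : ℝ)) :=
    hf.comp (measurable_add_const _)
  rw [lintegral_tsum fun x ↦ (hmeas x).aemeasurable,
    (ZSpan.isAddFundamentalDomain b volume).lintegral_eq_tsum'' f, ← e.tsum_eq,
    ZSpan.fundamentalDomain_pi_basisFun]
  simp only [he]

lemma volume_unitCube : volume (univ.pi fun _ : ι ↦ Ico (0 : ℝ) 1) = 1 := by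
  simp [volume_pi_pi]

lemma exists_tsum_translate_le_lintegral {f : (ι → ℝ) → ℝ≥0∞} (hf : Measurable f) :
    ∃ a ∈ univ.pi fun _ ↦ Ico (0 : ℝ) 1,
      ∑' x : ι → ℤ, f (a + fun l ↦ (x l : ℝ)) ≤ ∫⁻ y, f y := by
  have hmeas : Measurable fun a : ι → ℝ ↦ ∑' x : ι → ℤ, f (a + fun l ↦ (x l : ℝ)) :=
    Measurable.tsum fun x ↦ hf.comp (measurable_add_const _)
  obtain ⟨a, ha, hle⟩ := exists_le_setLAverage (μ := volume)
    (by rw [volume_unitCube]; exact one_ne_zero) (by rw [volume_unitCube]; exact ENNReal.one_ne_top)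
    (hmeas.aemeasurable (μ := volume.restrict (univ.pi fun _ : ι ↦ Ico (0 : ℝ) 1)))
  rw [setLAverage_eq, volume_unitCube, div_one, lintegral_unitCube_tsum_translate hf] at hle
  exact ⟨a, ha, hle⟩

end OffsetAveraging

section GridEdge

variable {ι : Type*} [DecidableEq ι]

/-- The segment from `δ y` to `δ (y + eᵢ)`. -/
def gridEdge (δ : ℝ) (y : ι → ℝ) (i : ι) : Set (EuclideanSpace ℝ ι) :=
  segment ℝ (WithLp.toLp 2 (δ • y)) (WithLp.toLp 2 (δ • (y + Pi.single i 1)))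

/-- The edges of the scaled lattice `δ (a + ℤ^ι)` that meet `F`, encoded as in `latticeGraph`. -/
def blockedEdges (F : Set (EuclideanSpace ℝ ι)) (δ : ℝ) (a : ι → ℝ) : Set ((ι → ℤ) × ι) :=
  {e | (gridEdge δ (a + fun l ↦ (e.1 l : ℝ)) e.2 ∩ F).Nonempty}

variable {δ : ℝ} {y : ι → ℝ} {i : ι}

lemma apply_mem_Icc_of_mem_gridEdge (hδ : 0 ≤ δ) {z : EuclideanSpace ℝ ι} (hz : z ∈ gridEdge δ y i)
    (l : ι) : z l ∈ Icc (δ * y l) (δ * (y l + (Pi.single i 1 : ι → ℝ) l)) := by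
  obtain ⟨s, t, hs, ht, hst, rfl⟩ := hz
  have hnonneg : 0 ≤ δ * (Pi.single i 1 : ι → ℝ) l :=
    mul_nonneg hδ ((Pi.single_nonneg.2 zero_le_one : (0 : ι → ℝ) ≤ Pi.single i 1) l)
  obtain rfl : s = 1 - t := by linarith
  simp only [mem_Icc, PiLp.add_apply, PiLp.smul_apply, Pi.smul_apply, Pi.add_apply, smul_eq_mul]
  constructor <;> nlinarith

variable [Fintype ι]

lemma volume_Icc_extended_le (hδ : 0 < δ) (c : ι → ℝ) (i : ι) {r : ℝ} (hr : 0 ≤ r) (hrδ : r ≤ δ) :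
    volume (Icc (fun l ↦ (c l - r) / δ - (Pi.single i 1 : ι → ℝ) l) fun l ↦ (c l + r) / δ) ≤
      ENNReal.ofReal (3 * (2 / δ) ^ (Fintype.card ι - 1)) *
        ENNReal.ofReal r ^ ((Fintype.card ι : ℝ) - 1) := by
  have hside (l : ι) : (c l + r) / δ - ((c l - r) / δ - (Pi.single i 1 : ι → ℝ) l) =
      2 / δ * r + (Pi.single i 1 : ι → ℝ) l := by ring
  have hlong : 2 / δ * r + 1 ≤ 3 := by
    rw [div_mul_eq_mul_div, ← le_sub_iff_add_le, div_le_iff₀ hδ]; linarith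
  have hnonneg : 0 ≤ 2 / δ * r := by positivity
  have hshort : ∏ l ∈ Finset.univ.erase i,
      ENNReal.ofReal (2 / δ * r + (Pi.single i 1 : ι → ℝ) l) =
        ENNReal.ofReal (2 / δ * r) ^ (Fintype.card ι - 1) := by
    rw [Finset.prod_congr rfl (g := fun _ ↦ ENNReal.ofReal (2 / δ * r)) fun l hl ↦ by
      simp [Finset.ne_of_mem_erase hl]]
    simp
  rw [Real.volume_Icc_pi, Finset.prod_congr rfl fun l _ ↦ congrArg _ (hside l),
    ← Finset.mul_prod_erase Finset.univ _ (Finset.mem_univ i), hshort,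
    ← Nat.cast_pred (Fintype.card_pos_iff.2 ⟨i⟩), ENNReal.rpow_natCast,
    ← ENNReal.ofReal_pow hnonneg, ← ENNReal.ofReal_pow hr,
    ← ENNReal.ofReal_mul (by rw [Pi.single_eq_same]; positivity),
    ← ENNReal.ofReal_mul (by positivity), mul_pow, mul_assoc, Pi.single_eq_same]
  gcongr

/-- The offsets whose edge in direction `i` hits a set of diameter `r ≤ δ` lie in a box of side
`2r / δ`, extended by `1` in direction `i`. -/
lemma exists_box_of_gridEdge_meets (hδ : 0 < δ) (U : Set (EuclideanSpace ℝ ι))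
    (hU : Metric.ediam U ≤ ENNReal.ofReal δ) (i : ι) :
    ∃ A : Set (ι → ℝ), MeasurableSet A ∧ (∀ y, (gridEdge δ y i ∩ U).Nonempty → y ∈ A) ∧
      volume A ≤ ENNReal.ofReal (3 * (2 / δ) ^ (Fintype.card ι - 1)) *
        ⨆ _ : U.Nonempty, Metric.ediam U ^ ((Fintype.card ι : ℝ) - 1) := by
  obtain rfl | hne := U.eq_empty_or_nonempty
  · exact ⟨∅, .empty, by simp, by simp⟩
  have hfin : Metric.ediam U ≠ ∞ := ne_top_of_le_ne_top ENNReal.ofReal_ne_top hU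
  have hbdd : Bornology.IsBounded U := Metric.isBounded_iff_ediam_ne_top.2 hfin
  set r := Metric.diam U
  have hr : Metric.ediam U = ENNReal.ofReal r := (ENNReal.ofReal_toReal hfin).symm
  have hrδ : r ≤ δ := (ENNReal.ofReal_le_ofReal_iff hδ.le).1 (hr ▸ hU)
  have hr0 : 0 ≤ r := Metric.diam_nonneg
  obtain ⟨c, hc⟩ := hne
  refine ⟨Icc (fun l ↦ (c l - r) / δ - (Pi.single i 1 : ι → ℝ) l) (fun l ↦ (c l + r) / δ),
    measurableSet_Icc, ?_, ?_⟩
  · rintro y ⟨z, hz, hzU⟩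
    have hzc (l : ι) : |z l - c l| ≤ r := by
      simpa using (PiLp.norm_apply_le (z - c) l).trans
        ((dist_eq_norm z c).ge.trans (Metric.dist_le_diam_of_mem hbdd hzU hc))
    have hzy (l : ι) := apply_mem_Icc_of_mem_gridEdge hδ.le hz l
    refine ⟨fun l ↦ ?_, fun l ↦ ?_⟩
    · rw [sub_le_iff_le_add, div_le_iff₀' hδ]
      linarith [(hzy l).2, neg_le_of_abs_le (hzc l)]
    · rw [le_div_iff₀' hδ]
      linarith [(hzy l).1, le_of_abs_le (hzc l)]
  · rw [iSup_pos ⟨c, hc⟩, hr]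
    exact volume_Icc_extended_le hδ c i hr0 hrδ

lemma exists_majorant_gridEdge_meets (hδ : 0 < δ) {F : Set (EuclideanSpace ℝ ι)} {D : ℝ≥0∞}
    (hF : μH[(Fintype.card ι : ℝ) - 1] F < D) (i : ι) :
    ∃ f : (ι → ℝ) → ℝ≥0∞, Measurable f ∧ (∀ y, (gridEdge δ y i ∩ F).Nonempty → 1 ≤ f y) ∧
      ∫⁻ y, f y ≤ ENNReal.ofReal (3 * (2 / δ) ^ (Fintype.card ι - 1)) * D := by
  obtain ⟨t, hFt, htdiam, htsum⟩ := exists_cover_of_hausdorffMeasure_lt hF (ENNReal.ofReal_pos.2 hδ)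
  choose A hAmeas hA hAvol using fun j ↦ exists_box_of_gridEdge_meets hδ (t j) (htdiam j) i
  have hmeas (j : ℕ) : Measurable ((A j).indicator (1 : (ι → ℝ) → ℝ≥0∞)) :=
    measurable_one.indicator (hAmeas j)
  refine ⟨fun y ↦ ∑' j, (A j).indicator 1 y, Measurable.tsum hmeas, ?_, ?_⟩
  · rintro y ⟨z, hz, hzF⟩
    obtain ⟨j, hzj⟩ := mem_iUnion.1 (hFt hzF)
    refine le_trans ?_ (ENNReal.le_tsum j)
    rw [indicator_of_mem (hA j y ⟨z, hz, hzj⟩), Pi.one_apply]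
  · calc ∫⁻ y, ∑' j, (A j).indicator 1 y = ∑' j, volume (A j) := by
          rw [lintegral_tsum fun j ↦ (hmeas j).aemeasurable]
          simp only [lintegral_indicator_one (hAmeas _)]
      _ ≤ ∑' j, ENNReal.ofReal (3 * (2 / δ) ^ (Fintype.card ι - 1)) *
            ⨆ _ : (t j).Nonempty, Metric.ediam (t j) ^ ((Fintype.card ι : ℝ) - 1) :=
          ENNReal.tsum_le_tsum hAvol
      _ ≤ _ := by
          rw [ENNReal.tsum_mul_left]
          gcongr

lemma exists_ncard_blockedEdges_le (hδ : 0 < δ) {F : Set (EuclideanSpace ℝ ι)} {D : NNReal}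
    (hF : μH[(Fintype.card ι : ℝ) - 1] F < D) :
    ∃ a ∈ univ.pi fun _ ↦ Ico (0 : ℝ) 1, (blockedEdges F δ a).Finite ∧
      ((blockedEdges F δ a).ncard : ℝ) ≤
        Fintype.card ι * (3 * (2 / δ) ^ (Fintype.card ι - 1) * D) := by
  choose f hfmeas hf hfint using exists_majorant_gridEdge_meets hδ hF
  obtain ⟨a, ha, hle⟩ := exists_tsum_translate_le_lintegral (f := fun y ↦ ∑ i, f i y)
    (Finset.univ.measurable_sum fun i _ ↦ hfmeas i)
  have hcount : ((blockedEdges F δ a).encard : ℝ≥0∞) ≤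
      ENNReal.ofReal (Fintype.card ι * (3 * (2 / δ) ^ (Fintype.card ι - 1) * D)) := by
    calc ((blockedEdges F δ a).encard : ℝ≥0∞)
        = ∑' e, (blockedEdges F δ a).indicator 1 e := by
          rw [← ENNReal.tsum_set_one, tsum_subtype (blockedEdges F δ a) (fun _ ↦ (1 : ℝ≥0∞))]; rfl
      _ ≤ ∑' e : (ι → ℤ) × ι, f e.2 (a + fun l ↦ (e.1 l : ℝ)) :=
          ENNReal.tsum_le_tsum fun e ↦ indicator_le (fun e he ↦ hf e.2 _ he) e
      _ = ∑' x : ι → ℤ, ∑ i, f i (a + fun l ↦ (x l : ℝ)) := by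
          rw [ENNReal.tsum_prod']
          simp only [tsum_fintype]
      _ ≤ ∫⁻ y, ∑ i, f i y := hle
      _ ≤ ∑ _i : ι, ENNReal.ofReal (3 * (2 / δ) ^ (Fintype.card ι - 1)) * D := by
          rw [lintegral_finsetSum _ fun i _ ↦ hfmeas i]
          exact Finset.sum_le_sum fun i _ ↦ hfint i
      _ = _ := by
          rw [Finset.sum_const, Finset.card_univ, nsmul_eq_mul, ← ENNReal.ofReal_coe_nnreal,
            ← ENNReal.ofReal_natCast, ← ENNReal.ofReal_mul (by positivity),
            ← ENNReal.ofReal_mul (by positivity)]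
  have hfin : (blockedEdges F δ a).Finite := encard_ne_top_iff.1 fun h ↦
    ENNReal.ofReal_ne_top (top_le_iff.1 (by simpa only [h, ENat.toENNReal_top] using hcount))
  refine ⟨a, ha, hfin, ?_⟩
  rwa [← hfin.cast_ncard_eq, ENat.toENNReal_coe, ← ENNReal.ofReal_natCast,
    ENNReal.ofReal_le_ofReal_iff (by positivity)] at hcount

end GridEdge

section Curves

variable {n : ℕ} {S : Set (Epc n)} {p q r : Epc n}

lemma geoDist_le_eVariationOn {γ : ℝ → Epc n} {K : NNReal} (hγ : LipschitzOnWith K γ (Icc 0 1))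
    (hS : MapsTo γ (Icc 0 1) S) : geoDist S (γ 0) (γ 1) ≤ eVariationOn γ (Icc 0 1) :=
  sInf_le ⟨γ, ⟨K, hγ⟩, rfl, rfl, hS, rfl⟩

lemma geoDist_le_edist (h : segment ℝ p q ⊆ S) : geoDist S p q ≤ edist p q := by
  have hlip : LipschitzOnWith (nndist p q) (AffineMap.lineMap p q : ℝ → Epc n) (Icc 0 1) :=
    (lipschitzWith_lineMap p q).lipschitzOnWith
  calc geoDist S p q
      ≤ eVariationOn (AffineMap.lineMap p q : ℝ → Epc n) (Icc 0 1) := by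
        simpa using geoDist_le_eVariationOn hlip fun t ht ↦
          h (segment_eq_image_lineMap ℝ p q ▸ mem_image_of_mem _ ht)
    _ ≤ nndist p q * eVariationOn id (Icc (0 : ℝ) 1) :=
        hlip.comp_eVariationOn_le (mapsTo_id _)
    _ = edist p q := by
        rw [eVariationOn_id_Icc, sub_zero, ENNReal.ofReal_one, mul_one, edist_nndist]

lemma geoDist_self (hp : p ∈ S) : geoDist S p p = 0 :=
  nonpos_iff_eq_zero.1 <| (geoDist_le_edist (by simpa using hp)).trans_eq (edist_self p)

lemma eVariationOn_comp_le_of_eqOn {X : Type*} [PseudoEMetricSpace X] {γ γ' : ℝ → X} {φ : ℝ → ℝ}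
    {s t : Set ℝ} (hφ : MonotoneOn φ s) (hst : MapsTo φ s t) (heq : EqOn γ' (γ ∘ φ) s) :
    eVariationOn γ' s ≤ eVariationOn γ t :=
  (eVariationOn.congr heq).trans_le (eVariationOn.comp_le_of_monotoneOn γ φ hφ hst)

/-- The concatenation of two curves `γ₁` and `γ₂` parametrised by `[0, 1]`, each at double speed.
Writing it as a sum of curves that are constant on one half makes it Lipschitz without a case
distinction; it passes through `γ₁` and then `γ₂` when `γ₁ 1 = γ₂ 0`. -/
def concatCurve (γ₁ γ₂ : ℝ → Epc n) (t : ℝ) : Epc n :=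
  γ₁ (projIcc 0 1 zero_le_one ((2 : ℝ) • t)) + γ₂ (projIcc 0 1 zero_le_one ((2 : ℝ) • t - 1)) - γ₂ 0

variable {γ₁ γ₂ : ℝ → Epc n} {K₁ K₂ : NNReal}

lemma exists_lipschitzOnWith_concatCurve (hγ₁ : LipschitzOnWith K₁ γ₁ (Icc 0 1))
    (hγ₂ : LipschitzOnWith K₂ γ₂ (Icc 0 1)) (s : Set ℝ) :
    ∃ K, LipschitzOnWith K (concatCurve γ₁ γ₂) s := by
  have hproj := (LipschitzWith.subtype_val _).comp
    (LipschitzWith.projIcc (zero_le_one (α := ℝ)))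
  have hmaps (φ : ℝ → ℝ) : MapsTo (fun t ↦ (projIcc 0 1 zero_le_one (φ t) : ℝ)) s (Icc 0 1) :=
    fun _ _ ↦ Subtype.coe_prop _
  exact ⟨_, ((hγ₁.comp (hproj.comp (lipschitzWith_smul (2 : ℝ))).lipschitzOnWith (hmaps _)).add
    (hγ₂.comp (hproj.comp ((lipschitzWith_smul (2 : ℝ)).sub
      (LipschitzWith.const (1 : ℝ)))).lipschitzOnWith (hmaps _))).sub
    (LipschitzWith.const (γ₂ 0)).lipschitzOnWith⟩

lemma eqOn_concatCurve_left (γ₁ γ₂ : ℝ → Epc n) :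
    EqOn (concatCurve γ₁ γ₂) (γ₁ ∘ fun t ↦ 2 * t) (Icc 0 (1 / 2)) := by
  intro t ht
  have h₁ : 2 * t ∈ Icc (0 : ℝ) 1 := ⟨by linarith [ht.1], by linarith [ht.2]⟩
  have h₂ : 2 * t - 1 ≤ 0 := by linarith [ht.2]
  simp [concatCurve, projIcc_of_mem _ h₁, projIcc_of_le_left _ h₂]

lemma eqOn_concatCurve_right (hglue : γ₁ 1 = γ₂ 0) :
    EqOn (concatCurve γ₁ γ₂) (γ₂ ∘ fun t ↦ 2 * t - 1) (Icc (1 / 2) 1) := by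
  intro t ht
  have h₁ : 1 ≤ 2 * t := by linarith [ht.1]
  have h₂ : 2 * t - 1 ∈ Icc (0 : ℝ) 1 := ⟨by linarith [ht.1], by linarith [ht.2]⟩
  simp [concatCurve, projIcc_of_mem _ h₂, projIcc_of_right_le _ h₁, hglue]

lemma geoDist_le_eVariationOn_add (hγ₁ : LipschitzOnWith K₁ γ₁ (Icc 0 1))
    (hγ₂ : LipschitzOnWith K₂ γ₂ (Icc 0 1)) (hglue : γ₁ 1 = γ₂ 0)
    (hS₁ : MapsTo γ₁ (Icc 0 1) S) (hS₂ : MapsTo γ₂ (Icc 0 1) S) :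
    geoDist S (γ₁ 0) (γ₂ 1) ≤ eVariationOn γ₁ (Icc 0 1) + eVariationOn γ₂ (Icc 0 1) := by
  set γ := concatCurve γ₁ γ₂
  have hleft : EqOn γ _ _ := eqOn_concatCurve_left γ₁ γ₂
  have hright : EqOn γ _ _ := eqOn_concatCurve_right hglue
  have hmaps₁ : MapsTo (fun t : ℝ ↦ 2 * t) (Icc 0 (1 / 2)) (Icc 0 1) := fun t ht ↦
    ⟨by linarith [ht.1], by linarith [ht.2]⟩
  have hmaps₂ : MapsTo (fun t : ℝ ↦ 2 * t - 1) (Icc (1 / 2) 1) (Icc 0 1) := fun t ht ↦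
    ⟨by linarith [ht.1], by linarith [ht.2]⟩
  have hmono₁ : Monotone fun t : ℝ ↦ 2 * t := fun s t hst ↦ by linarith
  have hmono₂ : Monotone fun t : ℝ ↦ 2 * t - 1 := fun s t hst ↦ by linarith
  have hS : MapsTo γ (Icc 0 1) S := by
    rw [← Icc_union_Icc_eq_Icc (show (0 : ℝ) ≤ 1 / 2 by norm_num) (by norm_num)]
    exact ((hS₁.comp hmaps₁).congr hleft.symm).union_union ((hS₂.comp hmaps₂).congr hright.symm)
      |>.mono_right (union_self S).le
  have h0 : γ 0 = γ₁ 0 := by simpa using hleft (left_mem_Icc.2 (by norm_num))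
  have h1 : γ 1 = γ₂ 1 := by
    simpa [show (2 : ℝ) - 1 = 1 by norm_num] using hright (right_mem_Icc.2 (by norm_num))
  obtain ⟨K, hγ⟩ := exists_lipschitzOnWith_concatCurve hγ₁ hγ₂ (Icc 0 1)
  calc geoDist S (γ₁ 0) (γ₂ 1)
      ≤ eVariationOn γ (Icc 0 1) := h0 ▸ h1 ▸ geoDist_le_eVariationOn hγ hS
    _ = eVariationOn γ (Icc 0 (1 / 2)) + eVariationOn γ (Icc (1 / 2) 1) := by
        simpa using (eVariationOn.Icc_add_Icc γ (by norm_num : (0 : ℝ) ≤ 1 / 2) (by norm_num)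
          (mem_univ (1 / 2))).symm
    _ ≤ eVariationOn γ₁ (Icc 0 1) + eVariationOn γ₂ (Icc 0 1) :=
        add_le_add (eVariationOn_comp_le_of_eqOn (hmono₁.monotoneOn _) hmaps₁ hleft)
          (eVariationOn_comp_le_of_eqOn (hmono₂.monotoneOn _) hmaps₂ hright)

lemma geoDist_triangle : geoDist S p r ≤ geoDist S p q + geoDist S q r := by
  rw [geoDist.eq_def S p q, geoDist.eq_def S q r, ENNReal.sInf_add]
  refine le_iInf₂ ?_
  rintro _ ⟨γ₁, ⟨K₁, hγ₁⟩, rfl, hq, hS₁, rfl⟩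
  rw [ENNReal.add_sInf]
  refine le_iInf₂ ?_
  rintro _ ⟨γ₂, ⟨K₂, hγ₂⟩, hq', rfl, hS₂, rfl⟩
  exact geoDist_le_eVariationOn_add hγ₁ hγ₂ (hq.trans hq'.symm) hS₁ hS₂

end Curves

section Topology

variable {X : Type*} [TopologicalSpace X] {s t : Set X}

lemma subset_of_isPreconnected_of_disjoint_frontier (hs : IsPreconnected s)
    (hst : Disjoint s (frontier t)) (hne : (s ∩ t).Nonempty) : s ⊆ t := by
  have hcover : s ⊆ interior t ∪ (closure t)ᶜ := fun x hx ↦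
    or_iff_not_imp_left.2 fun hint hcl ↦ hst.notMem_of_mem_left hx ⟨hcl, hint⟩
  obtain ⟨x, hx, hxt⟩ := hne
  refine (hs.subset_left_of_subset_union isOpen_interior isClosed_closure.isOpen_compl
    (disjoint_compl_right.mono_left interior_subset_closure) hcover ⟨x, hx, ?_⟩).trans
    interior_subset
  exact (hcover hx).resolve_right (not_not_intro (subset_closure hxt))

end Topology

section LatticePoint

variable {n : ℕ} {δ : ℝ} {a : Fin n → ℝ} {x y : Fin n → ℤ} {i : Fin n} {p q : Epc n}
  {F S W : Set (Epc n)}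

lemma dist_le_of_abs_sub_le {M : ℝ} (h : ∀ l, |p l - q l| ≤ M) : dist p q ≤ n * M := by
  calc dist p q = √(∑ l, |p l - q l| ^ 2) := by simp [EuclideanSpace.dist_eq, Real.dist_eq]
    _ ≤ ∑ l, |p l - q l| := Real.sqrt_le_iff.2 ⟨by positivity,
        Finset.sum_sq_le_sq_sum_of_nonneg fun l _ ↦ abs_nonneg _⟩
    _ ≤ ∑ _l : Fin n, M := Finset.sum_le_sum fun l _ ↦ h l
    _ = n * M := by simp

/-- The point of `ℝⁿ` with integer coordinates `x` in the grid of mesh `δ` shifted by `δ a`. -/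
def latticePoint (δ : ℝ) (a : Fin n → ℝ) (x : Fin n → ℤ) : Epc n :=
  WithLp.toLp 2 (δ • (a + fun l ↦ (x l : ℝ)))

lemma latticePoint_apply (l : Fin n) : latticePoint δ a x l = δ * (a l + x l) := rfl

lemma gridEdge_eq_segment_latticePoint :
    gridEdge δ (a + fun l ↦ (x l : ℝ)) i =
      segment ℝ (latticePoint δ a x) (latticePoint δ a (x + Pi.single i 1)) := by
  have hcast : (fun l ↦ ((x + Pi.single i 1 : Fin n → ℤ) l : ℝ)) =
      (fun l ↦ (x l : ℝ)) + Pi.single i 1 := by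
    ext l
    obtain rfl | hl := eq_or_ne l i <;> simp [*]
  rw [gridEdge, latticePoint, latticePoint, hcast, add_assoc]

lemma edist_latticePoint_add_single (hδ : 0 ≤ δ) :
    edist (latticePoint δ a x) (latticePoint δ a (x + Pi.single i 1)) = ENNReal.ofReal δ := by
  have hsub : latticePoint δ a (x + Pi.single i 1) =
      latticePoint δ a x + PiLp.single 2 i δ := by
    ext l
    obtain rfl | hl := eq_or_ne l i <;> simp [latticePoint_apply, mul_add, add_assoc, *]
  rw [hsub, edist_dist, dist_self_add_right, PiLp.norm_single, Real.norm_of_nonneg hδ]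

lemma segment_latticePoint_subset_of_adj (hδ : 0 ≤ δ)
    (hadj : (latticeGraph (blockedEdges (frontier S) δ a)).Adj x y) (hx : latticePoint δ a x ∈ S) :
    segment ℝ (latticePoint δ a x) (latticePoint δ a y) ⊆ S ∧
      edist (latticePoint δ a x) (latticePoint δ a y) = ENNReal.ofReal δ := by
  have hsubset {v : Fin n → ℤ} {i : Fin n} (hfree : (v, i) ∉ blockedEdges (frontier S) δ a)
      (hne : (segment ℝ (latticePoint δ a v) (latticePoint δ a (v + Pi.single i 1)) ∩ S).Nonempty) :
      segment ℝ (latticePoint δ a v) (latticePoint δ a (v + Pi.single i 1)) ⊆ S := by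
    refine subset_of_isPreconnected_of_disjoint_frontier (convex_segment _ _).isPreconnected ?_ hne
    rw [← gridEdge_eq_segment_latticePoint]
    exact disjoint_iff_inter_eq_empty.2 (not_nonempty_iff_eq_empty.1 hfree)
  obtain ⟨-, ⟨i, rfl, hfree⟩ | ⟨i, rfl, hfree⟩⟩ := (SimpleGraph.fromRel_adj _ _ _).1 hadj
  · exact ⟨hsubset hfree ⟨_, left_mem_segment _ _ _, hx⟩, edist_latticePoint_add_single hδ⟩
  · rw [segment_symm, edist_comm]
    exact ⟨hsubset hfree ⟨_, right_mem_segment _ _ _, hx⟩, edist_latticePoint_add_single hδ⟩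

lemma geoDist_latticePoint_le_of_walk (hδ : 0 ≤ δ)
    (w : (latticeGraph (blockedEdges (frontier S) δ a)).Walk x y) (hx : latticePoint δ a x ∈ S) :
    latticePoint δ a y ∈ S ∧
      geoDist S (latticePoint δ a x) (latticePoint δ a y) ≤ w.length * ENNReal.ofReal δ := by
  induction w with
  | nil => simp [hx, geoDist_self hx]
  | cons hadj w ih =>
    obtain ⟨hsegment, hedist⟩ := segment_latticePoint_subset_of_adj hδ hadj hx
    obtain ⟨hy, hdist⟩ := ih (hsegment (right_mem_segment _ _ _))
    refine ⟨hy, geoDist_triangle.trans ((add_le_add (geoDist_le_edist hsegment) hdist).trans_eq ?_)⟩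
    rw [hedist, SimpleGraph.Walk.length_cons]
    push_cast
    ring

lemma apply_mem_Ico_ceil_of_latticePoint_mem (hδ : 0 < δ) (hS : ∀ z ∈ S, ∀ l, z l ∈ Ioo (0 : ℝ) 1)
    (ha : a ∈ univ.pi fun _ ↦ Ico (0 : ℝ) 1) (hx : latticePoint δ a x ∈ S) (l : Fin n) :
    x l ∈ Ico (0 : ℤ) ⌈1 / δ⌉₊ := by
  have hal := ha l trivial
  obtain ⟨hpos, hlt⟩ := hS _ hx l
  rw [latticePoint_apply] at hpos hlt
  have hlower : (-1 : ℝ) < x l := by linarith [pos_of_mul_pos_right hpos hδ.le, hal.2]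
  have hupper : (x l : ℝ) < ⌈1 / δ⌉₊ := by
    linarith [(lt_div_iff₀' hδ).2 hlt, Nat.le_ceil (1 / δ), hal.1]
  exact ⟨Int.lt_iff_add_one_le.1 (by exact_mod_cast hlower), by exact_mod_cast hupper⟩

/-- The lower corner of the cell of the shifted grid of `latticePoint δ a` that contains `p`. -/
def floorVertex (δ : ℝ) (a : Fin n → ℝ) (p : Epc n) (l : Fin n) : ℤ := ⌊p l / δ - a l⌋

lemma apply_mem_Ico_floorVertex (hδ : 0 < δ) (a : Fin n → ℝ) (p : Epc n) (l : Fin n) :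
    p l ∈ Ico (δ * (a l + floorVertex δ a p l)) (δ * (a l + floorVertex δ a p l + 1)) := by
  rw [mem_Ico, ← le_div_iff₀' hδ, ← div_lt_iff₀' hδ, floorVertex]
  exact ⟨by linarith [Int.floor_le (p l / δ - a l)],
    by linarith [Int.lt_floor_add_one (p l / δ - a l)]⟩

lemma dist_latticePoint_floorVertex_le (hδ : 0 < δ) (a : Fin n → ℝ) (p : Epc n) :
    dist p (latticePoint δ a (floorVertex δ a p)) ≤ n * δ := by
  refine dist_le_of_abs_sub_le fun l ↦ abs_sub_le_iff.2 ?_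
  rw [latticePoint_apply]
  constructor <;> nlinarith [(apply_mem_Ico_floorVertex hδ a p l).1,
    (apply_mem_Ico_floorVertex hδ a p l).2]

lemma unblockedAround_floorVertex (hδ : 0 < δ) (a : Fin n → ℝ)
    (hF : Disjoint (Metric.closedBall p (n * (2 * δ))) F) :
    UnblockedAround (blockedEdges F δ a) (floorVertex δ a p) := by
  rintro v ⟨hlower, hupper⟩ i ⟨z, hz, hzF⟩
  refine hF.notMem_of_mem_left (Metric.mem_closedBall'.2 (dist_le_of_abs_sub_le fun l ↦ ?_)) hzF
  obtain ⟨hz₁, hz₂⟩ := apply_mem_Icc_of_mem_gridEdge hδ.le hz l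
  obtain ⟨hp₁, hp₂⟩ := apply_mem_Ico_floorVertex hδ a p l
  have hsingle : (Pi.single i 1 : Fin n → ℝ) l ≤ 1 := by
    obtain rfl | hl := eq_or_ne l i <;> simp [*]
  have hv₁ : (floorVertex δ a p l : ℝ) - 1 ≤ v l := by exact_mod_cast hlower l
  have hv₂ : (v l : ℝ) ≤ floorVertex δ a p l + 1 := by exact_mod_cast hupper l
  simp only [Pi.add_apply] at hz₁ hz₂
  rw [abs_sub_le_iff]
  constructor <;> nlinarith

lemma floorVertex_mem_Icc_of_dist_le (hδ : 0 < δ) (a : Fin n → ℝ) (hpq : dist p q ≤ δ) :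
    floorVertex δ a q ∈ Icc (floorVertex δ a p - 1) (floorVertex δ a p + 1) := by
  have hclose (l : Fin n) : |p l / δ - q l / δ| ≤ 1 := by
    rw [← sub_div, abs_div, abs_of_pos hδ, div_le_one hδ]
    simpa [dist_eq_norm] using
      (PiLp.norm_apply_le (p - q) l).trans ((dist_eq_norm p q).ge.trans hpq)
  refine ⟨fun l ↦ ?_, fun l ↦ ?_⟩
  · have : p l / δ - a l - 1 ≤ q l / δ - a l := by linarith [le_of_abs_le (hclose l)]
    simpa [floorVertex] using Int.floor_mono this
  · have : q l / δ - a l ≤ p l / δ - a l + 1 := by linarith [neg_le_of_abs_le (hclose l)]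
    simpa [floorVertex] using Int.floor_mono this

lemma reachable_floorVertex (hδ : 0 < δ) (a : Fin n → ℝ) (hW : IsPreconnected W)
    (hF : ∀ z ∈ W, Disjoint (Metric.closedBall z (n * (2 * δ))) F) (hp : p ∈ W) (hq : q ∈ W) :
    (latticeGraph (blockedEdges F δ a)).Reachable (floorVertex δ a p) (floorVertex δ a q) := by
  refine hW.induction₂ (fun p q ↦
    (latticeGraph (blockedEdges F δ a)).Reachable (floorVertex δ a p) (floorVertex δ a q))
    (fun z hz ↦ ?_) (fun _ _ _ _ _ _ ↦ .trans) (fun _ _ _ _ ↦ .symm) hp hq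
  filter_upwards [mem_nhdsWithin_of_mem_nhds (Metric.closedBall_mem_nhds z hδ)] with y hy
  exact (unblockedAround_floorVertex hδ a (hF z hz)).reachable
    (floorVertex_mem_Icc_of_dist_le hδ a (Metric.mem_closedBall'.1 hy))

end LatticePoint

section GeodesicDistance

variable {n : ℕ} {δ r : ℝ} {p q : Epc n} {S W : Set (Epc n)} {D : NNReal}

lemma geoDist_le_dist_latticeGraph (hδ : 0 < δ) (a : Fin n → ℝ) (hW : IsPreconnected W)
    (hWS : W ⊆ S) (hball : ∀ z ∈ W, Disjoint (Metric.closedBall z (n * (2 * δ))) (frontier S))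
    (hp : p ∈ W) (hq : q ∈ W) :
    latticePoint δ a (floorVertex δ a p) ∈ S ∧ geoDist S p q ≤ ENNReal.ofReal
      ((2 * n + (latticeGraph (blockedEdges (frontier S) δ a)).dist
        (floorVertex δ a p) (floorVertex δ a q)) * δ) := by
  have hradius : 0 ≤ (n : ℝ) * (2 * δ) := by positivity
  have hsegment (z : Epc n) (hz : z ∈ W) :
      segment ℝ z (latticePoint δ a (floorVertex δ a z)) ⊆ S := by
    have hsubset : Metric.closedBall z (n * (2 * δ)) ⊆ S :=
      subset_of_isPreconnected_of_disjoint_frontier (convex_closedBall z _).isPreconnected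
        (hball z hz) ⟨z, Metric.mem_closedBall_self hradius, hWS hz⟩
    refine ((convex_closedBall z _).segment_subset (Metric.mem_closedBall_self hradius)
      (Metric.mem_closedBall'.2 ((dist_latticePoint_floorVertex_le hδ a z).trans ?_))).trans hsubset
    gcongr
    linarith
  have hedist (z : Epc n) :
      edist z (latticePoint δ a (floorVertex δ a z)) ≤ ENNReal.ofReal (n * δ) := by
    rw [edist_dist]
    exact ENNReal.ofReal_le_ofReal (dist_latticePoint_floorVertex_le hδ a z)
  have hmem : latticePoint δ a (floorVertex δ a p) ∈ S := hsegment p hp (right_mem_segment _ _ _)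
  obtain ⟨w, hw⟩ := (reachable_floorVertex hδ a hW hball hp hq).exists_walk_length_eq_dist
  have hgrid := (geoDist_latticePoint_le_of_walk hδ.le w hmem).2
  have hstart := (geoDist_le_edist (hsegment p hp)).trans (hedist p)
  have hend := (geoDist_le_edist (segment_symm ℝ q _ ▸ hsegment q hq)).trans
    (edist_comm q _ ▸ hedist q)
  refine ⟨hmem, (geoDist_triangle.trans (add_le_add hstart
    (geoDist_triangle.trans (add_le_add hgrid hend)))).trans_eq ?_⟩
  rw [hw, ← ENNReal.ofReal_natCast, ← ENNReal.ofReal_mul (by positivity),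
    ← ENNReal.ofReal_add (by positivity) (by positivity),
    ← ENNReal.ofReal_add (by positivity) (by positivity)]
  ring_nf

lemma sqrt_ceil_pow_le (hn : 2 ≤ n) (hδ : 0 < δ) (hδ' : δ ≤ 1) :
    √((⌈1 / δ⌉₊ : ℝ) ^ n) ≤ (2 / δ) ^ (n - 1) := by
  have hone : 1 ≤ 1 / δ := (le_div_iff₀ hδ).2 (by linarith)
  have hsum : 2 / δ = 1 / δ + 1 / δ := by ring
  refine Real.sqrt_le_iff.2 ⟨by positivity, ?_⟩
  calc (⌈1 / δ⌉₊ : ℝ) ^ n ≤ (2 / δ) ^ n := by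
        gcongr
        linarith [Nat.ceil_lt_add_one (zero_le_one.trans hone)]
    _ ≤ (2 / δ) ^ ((n - 1) * 2) := pow_le_pow_right₀ (by linarith) (by omega)
    _ = ((2 / δ) ^ (n - 1)) ^ 2 := pow_mul _ _ _

lemma geoDist_le_of_mesh (hn : 2 ≤ n) (hδ : 0 < δ) (hδ' : δ ≤ 1)
    (hS : ∀ z ∈ S, ∀ i, z i ∈ Ioo (0 : ℝ) 1) (hF : μH[(n : ℝ) - 1] (frontier S) < D)
    (hW : IsPreconnected W) (hWS : W ⊆ S)
    (hball : ∀ z ∈ W, Disjoint (Metric.closedBall z (n * (2 * δ))) (frontier S))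
    (hp : p ∈ W) (hq : q ∈ W) :
    geoDist S p q ≤ ENNReal.ofReal
      (2 * n + 2 * (3 ^ n * (n * 3) * D + 6) * (2 / δ) ^ (n - 2)) := by
  obtain ⟨a, ha, hfin, hcard⟩ := exists_ncard_blockedEdges_le hδ
    (show μH[(Fintype.card (Fin n) : ℝ) - 1] (frontier S) < D by simpa using hF)
  obtain ⟨hmem, hgeo⟩ := geoDist_le_dist_latticeGraph hδ a hW hWS hball hp hq
  set G := latticeGraph (blockedEdges (frontier S) δ a)
  have hbox : ∀ v ∈ G.ball (floorVertex δ a p) ⊤, ∀ l, v l ∈ Ico (0 : ℤ) ⌈1 / δ⌉₊ := fun v hv ↦ by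
    obtain ⟨w⟩ := (SimpleGraph.mem_ball_top.1 hv).symm
    exact apply_mem_Ico_ceil_of_latticePoint_mem hδ hS ha
      (geoDist_latticePoint_le_of_walk hδ.le w hmem).1
  have : Nontrivial (Fin n) := Fin.nontrivial_iff_two_le.2 hn
  have hdist := dist_latticeGraph_le hfin hbox (reachable_floorVertex hδ a hW hball hp hq)
  rw [Fintype.card_fin] at hcard hdist
  have hpow : (2 / δ) ^ (n - 1) * δ = 2 * (2 / δ) ^ (n - 2) := by
    rw [show n - 1 = n - 2 + 1 by omega, pow_succ]
    field_simp
  refine hgeo.trans (ENNReal.ofReal_le_ofReal ?_)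
  calc (2 * n + (G.dist (floorVertex δ a p) (floorVertex δ a q) : ℝ)) * δ
      ≤ (2 * n + (3 ^ n * (n * (3 * (2 / δ) ^ (n - 1) * D)) + 6 * (2 / δ) ^ (n - 1))) * δ := by
        gcongr
        refine hdist.trans ?_
        gcongr
        exact sqrt_ceil_pow_le hn hδ hδ'
    _ = 2 * n * δ + (3 ^ n * (n * 3) * D + 6) * ((2 / δ) ^ (n - 1) * δ) := by ring
    _ ≤ 2 * n * 1 + (3 ^ n * (n * 3) * D + 6) * ((2 / δ) ^ (n - 1) * δ) := by gcongr
    _ = 2 * n + 2 * (3 ^ n * (n * 3) * D + 6) * (2 / δ) ^ (n - 2) := by rw [hpow]; ring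

lemma geoDist_le_one_of_isPreconnected {p q : Epc 1} {S W : Set (Epc 1)}
    (hS : ∀ z ∈ S, ∀ i, z i ∈ Ioo (0 : ℝ) 1) (hW : IsPreconnected W) (hWS : W ⊆ S)
    (hp : p ∈ W) (hq : q ∈ W) : geoDist S p q ≤ 1 := by
  have himage : Convex ℝ ((fun z : Epc 1 ↦ z 0) '' W) :=
    (hW.image _ (by fun_prop)).ordConnected.convex
  have hsegment : segment ℝ p q ⊆ W := by
    rintro _ ⟨s, t, hs, ht, hst, rfl⟩
    obtain ⟨z, hz, hzw⟩ := himage ⟨p, hp, rfl⟩ ⟨q, hq, rfl⟩ hs ht hst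
    convert hz
    ext l
    simpa [Subsingleton.elim l 0] using hzw.symm
  have hdist : dist p q ≤ 1 := by
    refine (dist_le_of_abs_sub_le (M := 1) fun l ↦ ?_).trans_eq (by simp)
    obtain ⟨hp₀, hp₁⟩ := hS p (hWS hp) l
    obtain ⟨hq₀, hq₁⟩ := hS q (hWS hq) l
    rw [abs_sub_le_iff]
    constructor <;> linarith
  refine (geoDist_le_edist (hsegment.trans hWS)).trans ?_
  rw [edist_dist]
  exact ENNReal.ofReal_le_one.2 hdist

lemma inv_min_one_pow_le (hn : 2 ≤ n) (hr : 0 < r) :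
    (min r 1)⁻¹ ^ (n - 2) ≤ 1 + r ^ (2 - n : ℝ) := by
  have hpow : r⁻¹ ^ (n - 2) = r ^ (2 - n : ℝ) := by
    rw [← Real.rpow_natCast, Real.inv_rpow hr.le, ← Real.rpow_neg hr.le, Nat.cast_sub hn]
    congr 1
    push_cast
    ring
  rcases min_cases r 1 with ⟨h, -⟩ | ⟨h, -⟩ <;> rw [h]
  · linarith
  · simpa using Real.rpow_nonneg hr.le _

theorem exists_geoDist_le_of_lt_infDist_frontier (hn : 1 ≤ n) (D : NNReal) :
    ∃ C > (0 : ℝ), ∀ r > (0 : ℝ), ∀ S W : Set (Epc n), (∀ z ∈ S, ∀ i, z i ∈ Ioo (0 : ℝ) 1) →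
      μH[(n : ℝ) - 1] (frontier S) < D → IsPreconnected W →
      W ⊆ {z ∈ S | r < Metric.infDist z (frontier S)} →
      ∀ p ∈ W, ∀ q ∈ W, geoDist S p q ≤ ENNReal.ofReal (C * (1 + r ^ (2 - n : ℝ))) := by
  obtain rfl | hn := hn.eq_or_lt
  · refine ⟨1, one_pos, fun r hr S W hS _ hW hWS p hp q hq ↦
      (geoDist_le_one_of_isPreconnected hS hW (fun z hz ↦ (hWS hz).1) hp hq).trans ?_⟩
    rw [one_mul, ENNReal.one_le_ofReal]
    linarith [Real.rpow_nonneg hr.le (2 - (1 : ℕ))]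
  · refine ⟨2 * n + 2 * (3 ^ n * (n * 3) * D + 6) * (4 * n) ^ (n - 2), by positivity,
      fun r hr S W hS hF hW hWS p hp q hq ↦ ?_⟩
    have : (0 : ℝ) < n := by positivity
    set δ : ℝ := min r 1 / (2 * n)
    have hδ : 0 < δ := by positivity
    have hδ' : δ ≤ 1 := (div_le_one (by positivity)).2 <| (min_le_right r 1).trans <| by
      norm_cast; omega
    have hball : ∀ z ∈ W, Disjoint (Metric.closedBall z (n * (2 * δ))) (frontier S) := fun z hz ↦ by
      refine Metric.disjoint_closedBall_of_lt_infDist (lt_of_le_of_lt ?_ (hWS hz).2)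
      rw [show n * (2 * δ) = min r 1 by simp only [δ]; field_simp]
      exact min_le_left _ _
    refine (geoDist_le_of_mesh hn hδ hδ' hS hF hW (fun z hz ↦ (hWS hz).1) hball hp hq).trans
      (ENNReal.ofReal_le_ofReal ?_)
    have hmesh : 2 / δ = 4 * n * (min r 1)⁻¹ := by simp only [δ]; field_simp; norm_num
    have hr' : 0 ≤ r ^ (2 - n : ℝ) := Real.rpow_nonneg hr.le _
    calc 2 * n + 2 * (3 ^ n * (n * 3) * D + 6) * (2 / δ) ^ (n - 2)
        ≤ 2 * n * (1 + r ^ (2 - n : ℝ)) + 2 * (3 ^ n * (n * 3) * D + 6) *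
            ((4 * n) ^ (n - 2) * (1 + r ^ (2 - n : ℝ))) := by
          rw [hmesh, mul_pow]
          refine add_le_add (le_mul_of_one_le_right (by positivity) (by linarith)) ?_
          gcongr _ * (_ * ?_)
          exact inv_min_one_pow_le hn hr
      _ = _ := by ring

end GeodesicDistance

theorem geodesic_distance_bound_general (d : ℕ) (hd : 2 ≤ d) (s : ℝ) (D : NNReal) {D' : ℝ}
    (hD' : 0 < D') :
    ∃ C > (0 : ℝ), ∀ ε > (0 : ℝ), ∀ S W : Set (Epc (d - 1)),
      (∀ z ∈ S, ∀ i, z i ∈ Ioo (0 : ℝ) 1) → μH[(d : ℝ) - 2] (frontier S) < D →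
      IsPreconnected W → W ⊆ {z ∈ S | D' * ε ^ (1 - s) < Metric.infDist z (frontier S)} →
      ∀ p ∈ W, ∀ q ∈ W,
        geoDist S p q ≤ ENNReal.ofReal (C * (1 + ε ^ ((s - 1) * ((d : ℝ) - 3)))) := by
  have hcast : ((d - 1 : ℕ) : ℝ) = d - 1 := Nat.cast_pred (by omega)
  obtain ⟨C, hC, hgeo⟩ := exists_geoDist_le_of_lt_infDist_frontier (n := d - 1) (by omega) D
  refine ⟨C * (1 + D' ^ (3 - d : ℝ)), by positivity, fun ε hε S W hS hF hW hWS p hp q hq ↦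
    (hgeo (D' * ε ^ (1 - s)) (by positivity) S W hS ?_ hW hWS p hp q hq).trans
      (ENNReal.ofReal_le_ofReal ?_)⟩
  · rwa [hcast, sub_sub, one_add_one_eq_two]
  · have hpow : (D' * ε ^ (1 - s)) ^ (2 - (d - 1 : ℕ) : ℝ) =
        D' ^ (3 - d : ℝ) * ε ^ ((s - 1) * ((d : ℝ) - 3)) := by
      rw [hcast, Real.mul_rpow hD'.le (by positivity), ← Real.rpow_mul hε.le]
      ring_nf
    rw [hpow, mul_assoc]
    gcongr
    have h₁ : 0 ≤ D' ^ (3 - d : ℝ) := by positivity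
    have h₂ : 0 ≤ ε ^ ((s - 1) * ((d : ℝ) - 3)) := by positivity
    linarith

/-- Geodesic distance bound: `dist_{W̃}(p,q) ≤ C(1 + ε^{(s-1)(d-3)})` for all
`p, q ∈ W`, uniformly over admissible pairs and small `ε`. -/
theorem geodesic_distance_bound
    (d : ℕ) (hd : 2 ≤ d) (D D' : ℝ) (hD : 0 < D) (hD' : 0 < D') :
    ∃ C > (0 : ℝ), ∃ ε₀ > (0 : ℝ), ∀ ε : ℝ, 0 < ε → ε < ε₀ →
      ∀ Wt W : Set (Epc (d - 1)), Admissible d D D' ε Wt W →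
        ∀ p ∈ W, ∀ q ∈ W,
          geoDist Wt p q ≤ ENNReal.ofReal (C * (1 + ε ^ ((sExp d - 1) * ((d : ℝ) - 3)))) := by
  obtain ⟨C, hC, hgeo⟩ := geodesic_distance_bound_general d hd (sExp d) D.toNNReal hD'
  refine ⟨C, hC, 1, one_pos, ?_⟩
  rintro ε hε - Wt W ⟨⟨hWt, -, -, -, hF⟩, ⟨x, -, rfl, -⟩, -⟩
  exact hgeo ε hε Wt _ hWt hF isPreconnected_connectedComponentIn
    (connectedComponentIn_subset _ _)

end Cleavage
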